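/- Let q be a prime power and n a positive integer with gcd(n,q)=1. Let δ ≥ 2 and r ≥ δ+1 with (r+δ-1) dividing gcd(n, q-1) and gcd(n/(r+δ-1), r+δ-1) = 1; set ρ = n/(r+δ-1). Let ξ be a primitive n-th root of unity in the splitting field of x^n - 1 over F_q, let α = ξ^ρ ∈ F_q (a primitive (r+δ-1)-th root of unity), let a, b be integers with aρ + b(r+δ-1) = 1, and let γ = α^a ∈ F_q. Then no nonzero polynomial c(x) ∈ F_q[x] of degree less than n having at most 2δ-1 nonzero coefficients is divisible by g(x) = (x-1)·∏_{i=1}^{δ-1}(x^ρ - α^i)·∏_{j=δ}^{2δ-2}(x - γ^j); equivalently, the q-ary cyclic code with generator polynomial g(x) has minimum distance at least 2δ. -/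

import Mathlib

open Polynomial

/-!
Split `c` into the sections of its coefficients along the residue classes modulo `ρ`. Divisibility
by `x^ρ - α^i` means that every section vanishes at `α^i`, so by the BCH bound each nonzero section
has at least `δ` terms, and two nonzero sections already give weight `2δ`. If there is only one
nonzero section `f`, then `c = x^s f(x^ρ)`. All of `1, γ, …, γ^(2δ-2)` are roots of `g`: the factor
`x^ρ - α^i` vanishes at `γ^i` because `γ^ρ = α`. Hence `f` vanishes at `1, α, …, α^(2δ-2)`, and the
BCH bound gives it at least `2δ` terms.
-/

theorem lt_card_support_of_eval_pow_eq_zero {R : Type*} [CommRing R] [IsDomain R] {m l d : ℕ}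
    {α : R} (hα : IsPrimitiveRoot α m) {p : R[X]} (hp : p ≠ 0) (hdeg : p.natDegree < m)
    (hroot : ∀ i < d, p.eval (α ^ (l + i)) = 0) : d < p.support.card := by
  by_contra! hle
  let e := p.support.equivFin.symm
  have he_lt (j) : (e j : ℕ) < m := (le_natDegree_of_mem_supp _ (e j).2).trans_lt hdeg
  have hinj : Function.Injective fun j ↦ α ^ (e j : ℕ) := fun j k hjk ↦
    e.injective (Subtype.ext (hα.pow_inj (he_lt j) (he_lt k) hjk))
  have hvandermonde (i : Fin p.support.card) :
      ∑ j, p.coeff (e j) * α ^ ((e j : ℕ) * l) * (α ^ (e j : ℕ)) ^ (i : ℕ) = 0 := calc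
    _ = ∑ j : Fin p.support.card, p.coeff (e j) * (α ^ (l + i : ℕ)) ^ (e j : ℕ) :=
      Finset.sum_congr rfl fun j _ ↦ by ring
    _ = p.eval (α ^ (l + i : ℕ)) := by
      rw [eval_eq_sum, sum_def, ← Finset.sum_coe_sort p.support, ← e.sum_comp]
    _ = 0 := hroot i (i.2.trans_le hle)
  have hzero := Matrix.eq_zero_of_forall_pow_sum_mul_pow_eq_zero hinj hvandermonde
  obtain ⟨k, hk⟩ := support_nonempty.2 hp
  have hk_zero : p.coeff k * α ^ (k * l) = 0 := by
    simpa only [Equiv.apply_symm_apply, Pi.zero_apply] using congrFun hzero (e.symm ⟨k, hk⟩)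
  have hα0 : α ≠ 0 := hα.ne_zero hdeg.ne_bot
  exact mem_support_iff.1 hk ((mul_eq_zero_iff_right (pow_ne_zero _ hα0)).1 hk_zero)

theorem coeff_iterate_divX {R : Type*} [Semiring R] (s : ℕ) (p : R[X]) (k : ℕ) :
    (divX^[s] p).coeff k = p.coeff (k + s) := by
  induction s generalizing p with
  | zero => rfl
  | succ s ih => rw [Function.iterate_succ_apply, ih, coeff_divX, add_assoc]

/-- The section of `p` along the exponents `s, s + ρ, s + 2ρ, …`: for `ρ ≠ 0`, its `k`-th
coefficient is the coefficient of `p` at `k * ρ + s`. For `s < ρ` these exponents form a residue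
class modulo `ρ`, and the sections for `s = 0, …, ρ - 1` together determine `p`. -/
noncomputable def residueSection {R : Type*} [CommSemiring R] (ρ s : ℕ) (p : R[X]) : R[X] :=
  contract ρ (divX^[s] p)

section residueSection

variable {R : Type*} [CommSemiring R] {ρ s : ℕ}

theorem coeff_residueSection (hρ : ρ ≠ 0) (p : R[X]) (k : ℕ) :
    (residueSection ρ s p).coeff k = p.coeff (k * ρ + s) := by
  rw [residueSection, coeff_contract hρ, coeff_iterate_divX]

theorem X_mul_residueSection (hs : s < ρ) (p : R[X]) :
    X * residueSection ρ s p = contract ρ (X ^ (ρ - s) * p) := by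
  have hρ : ρ ≠ 0 := Nat.ne_zero_of_lt hs
  ext (_ | k)
  · rw [coeff_X_mul_zero, coeff_contract hρ, zero_mul, coeff_X_pow_mul', if_neg (by omega)]
  · rw [coeff_X_mul, coeff_residueSection hρ, coeff_contract hρ, ← coeff_X_pow_mul _ (ρ - s)]
    congr 1
    rw [add_assoc, Nat.add_sub_cancel' hs.le, add_one_mul]

theorem residueSection_mul_expand (hs : s < ρ) (p f : R[X]) :
    residueSection ρ s (p * expand R ρ f) = residueSection ρ s p * f := by
  refine isRegular_X.left ?_
  simp only [← mul_assoc, X_mul_residueSection hs, contract_mul_expand (Nat.ne_zero_of_lt hs)]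

theorem natDegree_residueSection_lt {m : ℕ} {p : R[X]} (hp : p.natDegree < m * ρ) :
    (residueSection ρ s p).natDegree < m := by
  obtain ⟨hm, hρ⟩ : 0 < m ∧ 0 < ρ := CanonicallyOrderedAdd.mul_pos.1 (Nat.zero_lt_of_lt hp)
  refine (Nat.le_sub_one_iff_lt hm).1 (natDegree_le_iff_coeff_eq_zero.2 fun k hk ↦ ?_)
  rw [coeff_residueSection hρ.ne']
  refine coeff_eq_zero_of_natDegree_lt (hp.trans_le ?_)
  exact (Nat.mul_le_mul_right ρ (Nat.le_of_pred_lt hk)).trans (Nat.le_add_right _ _)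

theorem sum_X_pow_mul_expand_residueSection (hρ : ρ ≠ 0) (p : R[X]) :
    ∑ s ∈ Finset.range ρ, X ^ s * expand R ρ (residueSection ρ s p) = p := by
  ext k
  have hmem : k % ρ ∈ Finset.range ρ := Finset.mem_range.2 (Nat.mod_lt k hρ.bot_lt)
  rw [finsetSum_coeff, Finset.sum_eq_single_of_mem _ hmem fun s hs hsk ↦ ?_]
  · rw [coeff_X_pow_mul', if_pos (Nat.mod_le k ρ), coeff_expand hρ.bot_lt,
      if_pos (Nat.dvd_sub_mod k), coeff_residueSection hρ, Nat.div_mul_cancel (Nat.dvd_sub_mod k),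
      Nat.sub_add_cancel (Nat.mod_le k ρ)]
  · rw [coeff_X_pow_mul', coeff_expand hρ.bot_lt]
    split_ifs with hle hdvd
    · refine absurd ?_ hsk
      rw [← (Nat.modEq_iff_dvd' hle).2 hdvd, Nat.mod_eq_of_lt (Finset.mem_range.1 hs)]
    · rfl
    · rfl

theorem card_support_residueSection (hs : s < ρ) (p : R[X]) :
    (residueSection ρ s p).support.card = {k ∈ p.support | k % ρ = s}.card := by
  have hρ : ρ ≠ 0 := Nat.ne_zero_of_lt hs
  refine Finset.card_nbij' (· * ρ + s) (· / ρ) (fun k hk ↦ ?_) (fun k hk ↦ ?_) (fun k _ ↦ ?_)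
    fun k hk ↦ ?_
  · rw [Finset.mem_coe, mem_support_iff, coeff_residueSection hρ] at hk
    simp [hk, Nat.mod_eq_of_lt hs]
  · obtain ⟨hkp, rfl⟩ := Finset.mem_filter.1 hk
    rw [Finset.mem_coe, mem_support_iff, coeff_residueSection hρ, Nat.div_add_mod']
    exact mem_support_iff.1 hkp
  · dsimp only
    rw [mul_comm, Nat.mul_add_div hρ.bot_lt, Nat.div_eq_of_lt hs, add_zero]
  · obtain ⟨-, rfl⟩ := Finset.mem_filter.1 hk
    exact Nat.div_add_mod' k ρ

theorem sum_card_support_residueSection (hρ : ρ ≠ 0) (p : R[X]) :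
    ∑ s ∈ Finset.range ρ, (residueSection ρ s p).support.card = p.support.card := by
  rw [Finset.card_eq_sum_card_fiberwise (f := (· % ρ)) (t := Finset.range ρ)
    fun k _ ↦ Finset.mem_coe.2 (Finset.mem_range.2 (Nat.mod_lt k hρ.bot_lt))]
  exact Finset.sum_congr rfl fun s hs ↦ card_support_residueSection (Finset.mem_range.1 hs) p

theorem card_support_residueSection_add_le {t : ℕ} (hs : s < ρ) (ht : t < ρ) (hst : s ≠ t)
    (p : R[X]) :
    (residueSection ρ s p).support.card + (residueSection ρ t p).support.card ≤
      p.support.card := by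
  rw [← sum_card_support_residueSection (Nat.ne_zero_of_lt hs) p,
    ← Finset.sum_pair (f := fun i ↦ (residueSection ρ i p).support.card) hst]
  exact Finset.sum_le_sum_of_subset (by simp [Finset.insert_subset_iff, hs, ht])

theorem exists_residueSection_ne_zero (hρ : ρ ≠ 0) {p : R[X]} (hp : p ≠ 0) :
    ∃ s < ρ, residueSection ρ s p ≠ 0 := by
  by_contra! hzero
  refine hp ?_
  rw [← sum_X_pow_mul_expand_residueSection hρ p]
  exact Finset.sum_eq_zero fun s hs ↦ by rw [hzero s (Finset.mem_range.1 hs), map_zero, mul_zero]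

theorem X_pow_mul_expand_residueSection (hs : s < ρ) {p : R[X]}
    (hother : ∀ t < ρ, t ≠ s → residueSection ρ t p = 0) :
    X ^ s * expand R ρ (residueSection ρ s p) = p := by
  refine .trans (.symm <| Finset.sum_eq_single_of_mem s (Finset.mem_range.2 hs) fun t ht hts ↦ ?_)
    (sum_X_pow_mul_expand_residueSection (Nat.ne_zero_of_lt hs) p)
  rw [hother t (Finset.mem_range.1 ht) hts, map_zero, mul_zero]

end residueSection

theorem eval_residueSection_eq_zero {R : Type*} [CommRing R] {ρ s : ℕ} (hs : s < ρ) {β : R}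
    {p : R[X]} (hdvd : X ^ ρ - C β ∣ p) : (residueSection ρ s p).eval β = 0 := by
  have hexpand : expand R ρ (X - C β) = X ^ ρ - C β := by rw [map_sub, expand_X, expand_C]
  obtain ⟨f, rfl⟩ := hexpand ▸ hdvd
  rw [mul_comm, residueSection_mul_expand hs, eval_mul, eval_sub, eval_X, eval_C, sub_self,
    mul_zero]

section Weight

variable {R : Type*} [CommRing R] [IsDomain R] {m ρ s l d : ℕ} {α γ : R} {p : R[X]}

theorem lt_card_support_residueSection (hα : IsPrimitiveRoot α m) (hdeg : p.natDegree < m * ρ)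
    (hdvd : ∀ i < d, X ^ ρ - C (α ^ (l + i)) ∣ p) (hs : s < ρ) (hps : residueSection ρ s p ≠ 0) :
    d < (residueSection ρ s p).support.card :=
  lt_card_support_of_eval_pow_eq_zero hα hps (natDegree_residueSection_lt hdeg)
    fun i hi ↦ eval_residueSection_eq_zero hs (hdvd i hi)

theorem lt_card_support_of_residueSection_eq_zero (hα : IsPrimitiveRoot α m) (hγ : γ ^ ρ = α)
    (hp : p ≠ 0) (hdeg : p.natDegree < m * ρ) (hroot : ∀ j < d, p.eval (γ ^ (l + j)) = 0)
    (hs : s < ρ) (hother : ∀ t < ρ, t ≠ s → residueSection ρ t p = 0) : d < p.support.card := by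
  set f := residueSection ρ s p
  have hpf : X ^ s * expand R ρ f = p := X_pow_mul_expand_residueSection hs hother
  have hf0 : f ≠ 0 := fun hf0 ↦ hp (by rw [← hpf, hf0, map_zero, mul_zero])
  have hγ0 : γ ≠ 0 := by
    rintro rfl
    exact hα.ne_zero (Nat.pos_of_mul_pos_right (Nat.zero_lt_of_lt hdeg)).ne'
      (by rw [← hγ, zero_pow (Nat.ne_zero_of_lt hs)])
  have hroot_f (j) (hj : j < d) : f.eval (α ^ (l + j)) = 0 := by
    have hpj := hroot j hj
    rw [← hpf, eval_mul, eval_X_pow, expand_eval, pow_right_comm _ _ ρ, hγ] at hpj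
    exact (mul_eq_zero_iff_left (pow_ne_zero s (pow_ne_zero _ hγ0))).1 hpj
  calc d < f.support.card :=
        lt_card_support_of_eval_pow_eq_zero hα hf0 (natDegree_residueSection_lt hdeg) hroot_f
    _ ≤ p.support.card := by
        rw [← sum_card_support_residueSection (Nat.ne_zero_of_lt hs) p]
        exact Finset.single_le_sum_of_canonicallyOrdered
          (f := fun t ↦ (residueSection ρ t p).support.card) (Finset.mem_range.2 hs)

end Weight

/-- The generator polynomial `g` of the code, for arbitrary elements `α` and `γ` of a ring. When
`γ ^ ρ = α`, its roots include the `2δ - 1` consecutive powers `1, γ, …, γ ^ (2δ - 2)`. -/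
noncomputable def generatorPoly {R : Type*} [CommRing R] (ρ δ : ℕ) (α γ : R) : R[X] :=
  (X - 1) * (∏ i ∈ Finset.Icc 1 (δ - 1), (X ^ ρ - C (α ^ i)))
    * (∏ j ∈ Finset.Icc δ (2 * δ - 2), (X - C (γ ^ j)))

section generatorPoly

variable {R : Type*} [CommRing R] {ρ δ : ℕ} {α γ : R}

theorem X_pow_sub_C_dvd_generatorPoly {i : ℕ} (hi : i ∈ Finset.Icc 1 (δ - 1)) :
    X ^ ρ - C (α ^ i) ∣ generatorPoly ρ δ α γ :=
  ((Finset.dvd_prod_of_mem (fun i ↦ X ^ ρ - C (α ^ i)) hi).mul_left _).mul_right _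

theorem eval_generatorPoly_pow_eq_zero (hγ : γ ^ ρ = α) {j : ℕ} (hj : j < 2 * δ - 1) :
    (generatorPoly ρ δ α γ).eval (γ ^ j) = 0 := by
  rcases j.eq_zero_or_pos with rfl | hj0
  · simp [generatorPoly]
  rcases lt_or_ge j δ with hjδ | hjδ
  · refine eval_eq_zero_of_dvd_of_eval_eq_zero
      (X_pow_sub_C_dvd_generatorPoly (Finset.mem_Icc.2 ⟨hj0, Nat.le_pred_of_lt hjδ⟩)) ?_
    rw [eval_sub, eval_X_pow, eval_C, pow_right_comm, hγ, sub_self]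
  · have hmem : j ∈ Finset.Icc δ (2 * δ - 2) := Finset.mem_Icc.2 ⟨hjδ, Nat.le_pred_of_lt hj⟩
    refine eval_eq_zero_of_dvd_of_eval_eq_zero
      ((Finset.dvd_prod_of_mem (fun j ↦ X - C (γ ^ j)) hmem).mul_left _) ?_
    rw [eval_sub, eval_X, eval_C, sub_self]

end generatorPoly

theorem zpow_pow_eq_self_of_bezout {G : Type*} [GroupWithZero G] {α : G} (hα : α ≠ 0) {m ρ : ℕ}
    (hpow : α ^ m = 1) {a b : ℤ} (hab : a * ρ + b * m = 1) : (α ^ a) ^ ρ = α := calc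
  (α ^ a) ^ ρ = (α ^ a) ^ ρ * (α ^ m) ^ b := by rw [hpow, one_zpow, mul_one]
  _ = α ^ (a * ρ + b * m) := by
    rw [zpow_add₀ hα, zpow_mul, zpow_natCast, mul_comm b, zpow_mul, zpow_natCast]
  _ = α := by rw [hab, zpow_one]

theorem min_dist_ge_two_delta_general {R : Type*} [CommRing R] [IsDomain R] {m ρ δ : ℕ} {α γ : R}
    (hα : IsPrimitiveRoot α m) (hγ : γ ^ ρ = α) {p : R[X]} (hp : p ≠ 0)
    (hdeg : p.natDegree < m * ρ) (hg : generatorPoly ρ δ α γ ∣ p) : 2 * δ ≤ p.support.card := by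
  have hρ : ρ ≠ 0 := (Nat.pos_of_mul_pos_left (Nat.zero_lt_of_lt hdeg)).ne'
  have hsection (s) (hs : s < ρ) (hps : residueSection ρ s p ≠ 0) :
      δ ≤ (residueSection ρ s p).support.card :=
    Nat.le_of_pred_lt <| lt_card_support_residueSection (l := 1) (d := δ - 1) hα hdeg
      (fun i hi ↦ (X_pow_sub_C_dvd_generatorPoly (Finset.mem_Icc.2 (by omega))).trans hg) hs hps
  have hroot (j) (hj : j < 2 * δ - 1) : p.eval (γ ^ (0 + j)) = 0 :=
    eval_eq_zero_of_dvd_of_eval_eq_zero hg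
      (by rw [zero_add, eval_generatorPoly_pow_eq_zero hγ hj])
  obtain ⟨s, hs, hps⟩ := exists_residueSection_ne_zero hρ hp
  by_cases hother : ∀ t < ρ, t ≠ s → residueSection ρ t p = 0
  · exact Nat.le_of_pred_lt
      (lt_card_support_of_residueSection_eq_zero hα hγ hp hdeg hroot hs hother)
  · push Not at hother
    obtain ⟨t, ht, hts, hpt⟩ := hother
    calc 2 * δ = δ + δ := two_mul δ
      _ ≤ (residueSection ρ s p).support.card + (residueSection ρ t p).support.card :=
        add_le_add (hsection s hs hps) (hsection t ht hpt)
      _ ≤ p.support.card := card_support_residueSection_add_le hs ht hts.symm p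

/-- The key step of Theorem 3: with `ρ = n/(r+δ-1)`, `gcd(ρ, r+δ-1) = 1`, `ξ` a primitive
`n`-th root of unity, `α = ξ^ρ`, `aρ + b(r+δ-1) = 1` and `γ = α^a`, no nonzero polynomial
`c(x) ∈ F_q[x]` of degree `< n` with at most `2δ - 1` nonzero coefficients is divisible by
`g(x) = (x-1)·∏_{i=1}^{δ-1}(x^ρ - α^i)·∏_{j=δ}^{2δ-2}(x - γ^j)`; equivalently, the `q`-ary
cyclic code with generator polynomial `g` has minimum distance at least `2δ`. -/
theorem min_dist_ge_two_delta (F K : Type*) [Field F] [Fintype F] [Field K] [Algebra F K]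
    (q n r δ : ℕ) (hq : Fintype.card F = q) (hn : 0 < n) (hcop : Nat.Coprime n q)
    (hδ : 2 ≤ δ) (hr : δ + 1 ≤ r) (hdvd : (r + δ - 1) ∣ Nat.gcd n (q - 1))
    (ρ : ℕ) (hρ : ρ = n / (r + δ - 1))
    (hgcd : Nat.gcd ρ (r + δ - 1) = 1)
    (ξ : K) (hξ : IsPrimitiveRoot ξ n) (α : K) (hα : α = ξ ^ ρ)
    (a b : ℤ) (hab : a * (ρ : ℤ) + b * ((r + δ - 1 : ℕ) : ℤ) = 1)
    (γ : K) (hγ : γ = α ^ a) :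
    ∀ c : F[X], c ≠ 0 → c.natDegree < n → c.support.card ≤ 2 * δ - 1 →
      ¬ ((X - 1) * (∏ i ∈ Finset.Icc 1 (δ - 1), (X ^ ρ - C (α ^ i)))
          * (∏ j ∈ Finset.Icc δ (2 * δ - 2), (X - C (γ ^ j)))
          ∣ c.map (algebraMap F K)) := by
  intro c hc hdeg hcard hg
  have hmul : (r + δ - 1) * ρ = n :=
    hρ ▸ Nat.mul_div_cancel' (hdvd.trans (Nat.gcd_dvd_left n (q - 1)))
  have hαroot : IsPrimitiveRoot α (r + δ - 1) :=
    hα ▸ hξ.pow hn (hmul.symm.trans (mul_comm _ _))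
  have hγpow : γ ^ ρ = α :=
    hγ ▸ zpow_pow_eq_self_of_bezout (hαroot.ne_zero (by omega)) hαroot.pow_eq_one hab
  have hinj := (algebraMap F K).injective
  have hweight := min_dist_ge_two_delta_general hαroot hγpow
    ((Polynomial.map_ne_zero_iff hinj).2 hc) (by rwa [natDegree_map, hmul]) hg
  rw [support_map_of_injective c hinj] at hweight
  omega
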